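/- For all integers 0 ≤ k₀ ≤ k and all χ_{k₀},…,χ_k ∈ 𝔛 with Pr(r̄(j)=χ_j for all k₀ ≤ j ≤ k) > 0, writing χ_k = (α_k,β_k,γ_k,δ_k), the following holds for every χ' = (α',β',γ',δ') ∈ 𝔛 with f(β') = 0: Pr(r̄(k+1)=χ' | r̄(j)=χ_j for all k₀ ≤ j ≤ k) = 𝟙(γ'=γ_k and ⌊δ'−δ_k−1⌋_T = 0) · P_{α_k α'} · Q_{β_k β'}. -/

import Mathlib

open MeasureTheory ProbabilityTheory Matrix

noncomputable section

/-- The state space `[N] × [M] × [N] × [T]` of the extended process `r̄`.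
`Fin N`, `Fin M`, `Fin T` play the roles of `[N] = {1,…,N}`, `[M]`, `[T]`
(with `Fin T` being the 0-indexed version of `[T] = {1,…,T}`, i.e. `δ ∈ [T]`
corresponds to `δ - 1 : Fin T`). -/
abbrev XT (NN MM T : ℕ) : Type := Fin NN × Fin MM × Fin NN × Fin T

/-- `X` is a time-homogeneous Markov chain with transition probability matrix `P`:
for every `k`, every state `j` and every sequence of states `i`,
`Pr(X(k+1) = j ∧ X(l) = i l for all l ≤ k) = P (i k) j * Pr(X(l) = i l for all l ≤ k)`. -/
def IsMarkovChain {Ω : Type} {_mΩ : MeasurableSpace Ω} (μ : Measure Ω) {S : Type}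
    (X : ℕ → Ω → S) (P : S → S → ℝ) : Prop :=
  ∀ (k : ℕ) (j : S) (i : ℕ → S),
    (μ {ω | X (k + 1) ω = j ∧ ∀ l ≤ k, X l ω = i l}).toReal
      = P (i k) j * (μ {ω | ∀ l ≤ k, X l ω = i l}).toReal

/-- `⌊m⌋_T`, the unique element of `{0,…,T-1}` congruent to `m` modulo `T`, as `Fin T`. -/
def intToFin (T : ℕ) [NeZero T] (a : ℤ) : Fin T :=
  ⟨(a % (T : ℤ)).toNat, by
    have hT : 0 < (T : ℤ) := by
      exact_mod_cast Nat.pos_of_ne_zero (NeZero.ne T)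
    have h1 : 0 ≤ a % (T : ℤ) := Int.emod_nonneg a (by omega)
    have h2 : a % (T : ℤ) < (T : ℤ) := Int.emod_lt_of_pos a hT
    omega⟩

-- `τ(k)`: the most recent observation time `≤ k` (i.e. the largest `j ≤ k` with
-- `f(s(j)) = 1`), or `τ₀` if no observation has occurred up to time `k` (`k < t₀`).
open Classical in
def tauZ {Ω : Type} {MM : ℕ} (s : ℕ → Ω → Fin MM) (f : Fin MM → Bool)
    (τ₀ : ℤ) (k : ℕ) (ω : Ω) : ℤ :=
  if ∃ j ≤ k, f (s j ω) = true
  then ((Nat.findGreatest (fun j => f (s j ω) = true) k : ℕ) : ℤ)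
  else τ₀

-- `σ(k) = r(τ(k))` if an observation occurred by time `k` (i.e. `k ≥ t₀`), else `σ₀`.
open Classical in
def sigmaProc {Ω : Type} {NN MM : ℕ} (r : ℕ → Ω → Fin NN) (s : ℕ → Ω → Fin MM)
    (f : Fin MM → Bool) (σ₀ : Fin NN) (k : ℕ) (ω : Ω) : Fin NN :=
  if ∃ j ≤ k, f (s j ω) = true
  then r (Nat.findGreatest (fun j => f (s j ω) = true) k) ω
  else σ₀

/-- `ρ(k) = ⌊k - τ(k)⌋_T + 1 ∈ [T]`, represented 0-indexed as `⌊k - τ(k)⌋_T : Fin T`. -/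
def rhoProc {Ω : Type} {MM T : ℕ} [NeZero T] (s : ℕ → Ω → Fin MM) (f : Fin MM → Bool)
    (τ₀ : ℤ) (k : ℕ) (ω : Ω) : Fin T :=
  intToFin T ((k : ℤ) - tauZ s f τ₀ k ω)

/-- The extended process `r̄(k) = (r(k), s(k), σ(k), ρ(k))`. -/
def rbarProc {Ω : Type} {NN MM T : ℕ} [NeZero T] (r : ℕ → Ω → Fin NN)
    (s : ℕ → Ω → Fin MM) (f : Fin MM → Bool) (τ₀ : ℤ) (σ₀ : Fin NN)
    (k : ℕ) (ω : Ω) : XT NN MM T :=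
  (r k ω, s k ω, sigmaProc r s f σ₀ k ω, rhoProc s f τ₀ k ω)

/-- Membership in `𝔛`: if `f(β) = 1` then `α = γ` and `δ = 1` (0-indexed: `δ = 0`). -/
def inX {NN MM T : ℕ} [NeZero T] (f : Fin MM → Bool) (χ : XT NN MM T) : Prop :=
  f χ.2.1 = true → χ.1 = χ.2.2.1 ∧ χ.2.2.2 = 0

/-- The transition probabilities `p̄_{χχ'}` of the extended chain. The condition
`⌊δ' - δ - 1⌋_T = 0` for `δ, δ' ∈ [T]` is, in 0-indexed form, `δ' = δ + 1` in `Fin T`. -/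
def pbar {NN MM T : ℕ} [NeZero T] (P : Matrix (Fin NN) (Fin NN) ℝ)
    (Q : Matrix (Fin MM) (Fin MM) ℝ) (f : Fin MM → Bool) (χ χ' : XT NN MM T) : ℝ :=
  (if f χ'.2.1 = true
    then (if χ'.1 = χ'.2.2.1 ∧ χ'.2.2.2 = 0 then (1 : ℝ) else 0)
    else (if χ'.2.2.1 = χ.2.2.1 ∧ χ'.2.2.2 = χ.2.2.2 + 1 then (1 : ℝ) else 0))
  * P χ.1 χ'.1 * Q χ.2.1 χ'.2.1

/-- The state trajectory of the closed-loop system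
`x(k+1) = A(mode(k)) x(k) + E(mode(k)) w(k)`, `x(0) = x₀`. -/
def traj {Ω S : Type} {n q : ℕ}
    (Amat : S → Matrix (Fin n) (Fin n) ℝ) (Emat : S → Matrix (Fin n) (Fin q) ℝ)
    (mode : ℕ → Ω → S) (w : ℕ → Ω → Fin q → ℝ) (x0 : Fin n → ℝ) : ℕ → Ω → Fin n → ℝ
  | 0, _ => x0
  | (k + 1), ω =>
      (Amat (mode k ω)).mulVec (traj Amat Emat mode w x0 k ω)
        + (Emat (mode k ω)).mulVec (w k ω)

/-- `A_{K,χ} = A_α + B_α K_{γ,δ}`. -/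
def AKmat {NN MM T n m : ℕ} (A : Fin NN → Matrix (Fin n) (Fin n) ℝ)
    (B : Fin NN → Matrix (Fin n) (Fin m) ℝ)
    (K : Fin NN → Fin T → Matrix (Fin m) (Fin n) ℝ) (χ : XT NN MM T) :
    Matrix (Fin n) (Fin n) ℝ :=
  A χ.1 + B χ.1 * K χ.2.2.1 χ.2.2.2

/-- `C_{K,χ} = C_α + D_α K_{γ,δ}`. -/
def CKmat {NN MM T n m ℓ : ℕ} (C : Fin NN → Matrix (Fin ℓ) (Fin n) ℝ)
    (D : Fin NN → Matrix (Fin ℓ) (Fin m) ℝ)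
    (K : Fin NN → Fin T → Matrix (Fin m) (Fin n) ℝ) (χ : XT NN MM T) :
    Matrix (Fin ℓ) (Fin n) ℝ :=
  C χ.1 + D χ.1 * K χ.2.2.1 χ.2.2.2

/-- Squared Euclidean norm of a vector, as an extended nonnegative real. -/
def sqE {d : ℕ} (v : Fin d → ℝ) : ENNReal := ENNReal.ofReal (∑ i, (v i) ^ 2)

-- The operator `D̄_χ(R) = ∑_{χ' ∈ 𝔛} p̄_{χ'χ} R_{χ'}`.
open Classical in
def Dop {NN MM T n : ℕ} [NeZero T] (P : Matrix (Fin NN) (Fin NN) ℝ)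
    (Q : Matrix (Fin MM) (Fin MM) ℝ) (f : Fin MM → Bool)
    (R : XT NN MM T → Matrix (Fin n) (Fin n) ℝ) (χ : XT NN MM T) :
    Matrix (Fin n) (Fin n) ℝ :=
  ∑ χ' : XT NN MM T, if inX f χ' then pbar P Q f χ' χ • R χ' else 0

-- The operator `F̄_χ(Z) = ∑_{χ' ∈ 𝔛} p̄_{χχ'} Z_{χ,χ'}`.
open Classical in
def Fop {NN MM T n : ℕ} [NeZero T] (P : Matrix (Fin NN) (Fin NN) ℝ)
    (Q : Matrix (Fin MM) (Fin MM) ℝ) (f : Fin MM → Bool)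
    (Z : XT NN MM T → XT NN MM T → Matrix (Fin n) (Fin n) ℝ) (χ : XT NN MM T) :
    Matrix (Fin n) (Fin n) ℝ :=
  ∑ χ' : XT NN MM T, if inX f χ' then pbar P Q f χ χ' • Z χ χ' else 0

/-- A pair `(γ,δ) ∈ [N] × [T]` is admissible if `(α,β,γ,δ) ∈ 𝔛` for some `α, β`. -/
def Admissible {NN MM T : ℕ} [NeZero T] (f : Fin MM → Bool) (g : Fin NN) (d : Fin T) : Prop :=
  ∃ (α : Fin NN) (β : Fin MM), inX (T := T) f (α, β, g, d)

/-- A realization, on some probability space, of the pair of independent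
time-homogeneous Markov chains `(r, s)` with transition matrices `P` and `Q`. -/
structure MJLSReal (NN MM : ℕ) (P : Matrix (Fin NN) (Fin NN) ℝ)
    (Q : Matrix (Fin MM) (Fin MM) ℝ) : Type 1 where
  Ω : Type
  inst : MeasurableSpace Ω
  μ : @Measure Ω inst
  prob : IsProbabilityMeasure μ
  r : ℕ → Ω → Fin NN
  s : ℕ → Ω → Fin MM
  meas_r : ∀ k, Measurable[inst] (r k)
  meas_s : ∀ k, Measurable[inst] (s k)
  markov_r : IsMarkovChain μ r fun i j => P i j
  markov_s : IsMarkovChain μ s fun i j => Q i j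
  indep : IndepFun (fun ω l => r l ω) (fun ω l => s l ω) μ

/-- A realization, on some probability space, of a time-homogeneous Markov chain `θ`
taking values in `𝔛` with transition probabilities `p̄`. -/
structure ThetaReal (NN MM T : ℕ) [NeZero T] (P : Matrix (Fin NN) (Fin NN) ℝ)
    (Q : Matrix (Fin MM) (Fin MM) ℝ) (f : Fin MM → Bool) : Type 1 where
  Ω : Type
  inst : MeasurableSpace Ω
  μ : @Measure Ω inst
  prob : IsProbabilityMeasure μ
  θ : ℕ → Ω → XT NN MM T
  meas : ∀ k, Measurable[inst] (θ k)
  mem : ∀ k ω, inX f (θ k ω)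
  markov : IsMarkovChain μ θ (pbar P Q f)

/-- Mean square stability of the closed-loop system `Σ_K`: there are `c > 0` and
`λ ∈ [0,1)` such that for every realization, every deterministic initialization
(`r(0) = r₀`, `s(0) = s₀` a.s., together with `σ₀` and `τ₀ ≤ 0`, so that `r̄(0)`
is a deterministic element of `𝔛`), every `x₀` and every `k`,
`E[‖x(k)‖²] ≤ c λ^k ‖x₀‖²` (with `w ≡ 0`). -/
def MeanSquareStable {NN MM T n m q : ℕ} [NeZero T]
    (P : Matrix (Fin NN) (Fin NN) ℝ) (Qm : Matrix (Fin MM) (Fin MM) ℝ) (f : Fin MM → Bool)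
    (A : Fin NN → Matrix (Fin n) (Fin n) ℝ) (B : Fin NN → Matrix (Fin n) (Fin m) ℝ)
    (E : Fin NN → Matrix (Fin n) (Fin q) ℝ)
    (K : Fin NN → Fin T → Matrix (Fin m) (Fin n) ℝ) : Prop :=
  ∃ c : ℝ, 0 < c ∧ ∃ lam : ℝ, 0 ≤ lam ∧ lam < 1 ∧
    ∀ (S : MJLSReal NN MM P Qm) (τ₀ : ℤ), τ₀ ≤ 0 →
      ∀ (σ₀ r₀ : Fin NN) (s₀ : Fin MM),
        (∀ᵐ ω ∂S.μ, S.r 0 ω = r₀ ∧ S.s 0 ω = s₀) →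
        ∀ (x0 : Fin n → ℝ) (k : ℕ),
          (∫⁻ ω, sqE (traj (AKmat A B K) (fun χ => E χ.1)
              (rbarProc S.r S.s f τ₀ σ₀) (fun _ _ => 0) x0 k ω) ∂S.μ)
            ≤ ENNReal.ofReal (c * lam ^ k * ∑ i, (x0 i) ^ 2)

/-- Mean square stability of `Σ̄_K` (the system driven by the chain `θ`). -/
def MeanSquareStableBar {NN MM T n m q : ℕ} [NeZero T]
    (P : Matrix (Fin NN) (Fin NN) ℝ) (Qm : Matrix (Fin MM) (Fin MM) ℝ) (f : Fin MM → Bool)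
    (A : Fin NN → Matrix (Fin n) (Fin n) ℝ) (B : Fin NN → Matrix (Fin n) (Fin m) ℝ)
    (E : Fin NN → Matrix (Fin n) (Fin q) ℝ)
    (K : Fin NN → Fin T → Matrix (Fin m) (Fin n) ℝ) : Prop :=
  ∃ c : ℝ, 0 < c ∧ ∃ lam : ℝ, 0 ≤ lam ∧ lam < 1 ∧
    ∀ (S : ThetaReal NN MM T P Qm f) (χ : XT NN MM T), inX f χ →
      (∀ᵐ ω ∂S.μ, S.θ 0 ω = χ) →
      ∀ (x0 : Fin n → ℝ) (k : ℕ),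
        (∫⁻ ω, sqE (traj (AKmat A B K) (fun χ' => E χ'.1) S.θ (fun _ _ => 0) x0 k ω) ∂S.μ)
          ≤ ENNReal.ofReal (c * lam ^ k * ∑ i, (x0 i) ^ 2)

/-- The impulse disturbance `w = e_i φ`, i.e. `w(0) = e_i` and `w(k) = 0` for `k ≥ 1`. -/
def impulse {Ω : Type} (q : ℕ) (i : Fin q) : ℕ → Ω → Fin q → ℝ :=
  fun k _ j => if k = 0 ∧ j = i then 1 else 0

/-- `∑_k E[‖z(k; 0, χ, e_i φ)‖²]` for `Σ_K` on a given realization with data `(τ₀, σ₀)`. -/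
def H2TermSigma {NN MM T n m q ℓ : ℕ} [NeZero T]
    {P : Matrix (Fin NN) (Fin NN) ℝ} {Qm : Matrix (Fin MM) (Fin MM) ℝ}
    (S : MJLSReal NN MM P Qm) (f : Fin MM → Bool) (τ₀ : ℤ) (σ₀ : Fin NN)
    (A : Fin NN → Matrix (Fin n) (Fin n) ℝ) (B : Fin NN → Matrix (Fin n) (Fin m) ℝ)
    (C : Fin NN → Matrix (Fin ℓ) (Fin n) ℝ) (D : Fin NN → Matrix (Fin ℓ) (Fin m) ℝ)
    (E : Fin NN → Matrix (Fin n) (Fin q) ℝ)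
    (K : Fin NN → Fin T → Matrix (Fin m) (Fin n) ℝ) (i : Fin q) : ENNReal :=
  ∑' k : ℕ, ∫⁻ ω, sqE ((CKmat C D K (rbarProc S.r S.s f τ₀ σ₀ k ω)).mulVec
      (traj (AKmat A B K) (fun χ => E χ.1) (rbarProc S.r S.s f τ₀ σ₀)
        (impulse q i) 0 k ω)) ∂S.μ

-- `‖Σ_K‖₂² < γ`, where `‖Σ_K‖₂² = ∑_{i=1}^q ∑_{χ ∈ 𝔛} μ̄(χ) ‖z(⬝;0,χ,e_iφ)‖₂²` and the
-- expectations are over arbitrary realizations with deterministic initialization `r̄(0) = χ`.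
open Classical in
def H2SqLtSigma {NN MM T n m q ℓ : ℕ} [NeZero T]
    (P : Matrix (Fin NN) (Fin NN) ℝ) (Qm : Matrix (Fin MM) (Fin MM) ℝ) (f : Fin MM → Bool)
    (A : Fin NN → Matrix (Fin n) (Fin n) ℝ) (B : Fin NN → Matrix (Fin n) (Fin m) ℝ)
    (C : Fin NN → Matrix (Fin ℓ) (Fin n) ℝ) (D : Fin NN → Matrix (Fin ℓ) (Fin m) ℝ)
    (E : Fin NN → Matrix (Fin n) (Fin q) ℝ)
    (K : Fin NN → Fin T → Matrix (Fin m) (Fin n) ℝ)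
    (μbar : XT NN MM T → ℝ) (γ : ℝ) : Prop :=
  ∀ (S : Fin q → XT NN MM T → MJLSReal NN MM P Qm)
    (τ : Fin q → XT NN MM T → ℤ) (σv : Fin q → XT NN MM T → Fin NN),
    (∀ i χ, inX f χ → τ i χ ≤ 0 ∧
        (∀ᵐ ω ∂(S i χ).μ, rbarProc (S i χ).r (S i χ).s f (τ i χ) (σv i χ) 0 ω = χ)) →
    (∑ i : Fin q, ∑ χ : XT NN MM T,
        if inX f χ
        then ENNReal.ofReal (μbar χ) * H2TermSigma (S i χ) f (τ i χ) (σv i χ) A B C D E K i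
        else 0)
      < ENNReal.ofReal γ

/-- `∑_k E[‖z̄(k; 0, χ, e_i φ)‖²]` for `Σ̄_K` on a given realization of `θ`. -/
def H2TermBar {NN MM T n m q ℓ : ℕ} [NeZero T]
    {P : Matrix (Fin NN) (Fin NN) ℝ} {Qm : Matrix (Fin MM) (Fin MM) ℝ} {f : Fin MM → Bool}
    (S : ThetaReal NN MM T P Qm f)
    (A : Fin NN → Matrix (Fin n) (Fin n) ℝ) (B : Fin NN → Matrix (Fin n) (Fin m) ℝ)
    (C : Fin NN → Matrix (Fin ℓ) (Fin n) ℝ) (D : Fin NN → Matrix (Fin ℓ) (Fin m) ℝ)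
    (E : Fin NN → Matrix (Fin n) (Fin q) ℝ)
    (K : Fin NN → Fin T → Matrix (Fin m) (Fin n) ℝ) (i : Fin q) : ENNReal :=
  ∑' k : ℕ, ∫⁻ ω, sqE ((CKmat C D K (S.θ k ω)).mulVec
      (traj (AKmat A B K) (fun χ => E χ.1) S.θ (impulse q i) 0 k ω)) ∂S.μ

-- `‖Σ̄_K‖₂² < γ` (the `H₂` norm of `Σ̄_K`, defined with `θ` in place of `r̄`).
open Classical in
def H2SqLtBar {NN MM T n m q ℓ : ℕ} [NeZero T]
    (P : Matrix (Fin NN) (Fin NN) ℝ) (Qm : Matrix (Fin MM) (Fin MM) ℝ) (f : Fin MM → Bool)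
    (A : Fin NN → Matrix (Fin n) (Fin n) ℝ) (B : Fin NN → Matrix (Fin n) (Fin m) ℝ)
    (C : Fin NN → Matrix (Fin ℓ) (Fin n) ℝ) (D : Fin NN → Matrix (Fin ℓ) (Fin m) ℝ)
    (E : Fin NN → Matrix (Fin n) (Fin q) ℝ)
    (K : Fin NN → Fin T → Matrix (Fin m) (Fin n) ℝ)
    (μbar : XT NN MM T → ℝ) (γ : ℝ) : Prop :=
  ∀ (S : Fin q → XT NN MM T → ThetaReal NN MM T P Qm f),
    (∀ i χ, inX f χ → (∀ᵐ ω ∂(S i χ).μ, (S i χ).θ 0 ω = χ)) →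
    (∑ i : Fin q, ∑ χ : XT NN MM T,
        if inX f χ
        then ENNReal.ofReal (μbar χ) * H2TermBar (S i χ) A B C D E K i
        else 0)
      < ENNReal.ofReal γ

/-- The σ-algebra `Θ_k` generated by `r(0), s(0), …, r(k), s(k)`, for a realization. -/
def sigFiltSigma {NN MM : ℕ} {P : Matrix (Fin NN) (Fin NN) ℝ}
    {Q : Matrix (Fin MM) (Fin MM) ℝ} (S : MJLSReal NN MM P Q) (k : ℕ) :
    MeasurableSpace S.Ω :=
  ⨆ j ∈ Finset.range (k + 1),
    (MeasurableSpace.comap (S.r j) inferInstance ⊔ MeasurableSpace.comap (S.s j) inferInstance)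

/-- The σ-algebra generated by `θ(0), …, θ(k)`, for a realization of `θ`. -/
def sigFiltBar {NN MM T : ℕ} [NeZero T] {P : Matrix (Fin NN) (Fin NN) ℝ}
    {Q : Matrix (Fin MM) (Fin MM) ℝ} {f : Fin MM → Bool} (S : ThetaReal NN MM T P Q f)
    (k : ℕ) : MeasurableSpace S.Ω :=
  ⨆ j ∈ Finset.range (k + 1), MeasurableSpace.comap (S.θ j) inferInstance

/-- `Σ_K` satisfies `‖Σ_K‖∞² < γ`: there is `0 ≤ c < γ` such that `‖z‖₂² ≤ c ‖w‖₂²`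
for every realization, every deterministic initialization `r̄(0) = r̄₀ ∈ 𝔛`, and
every nonzero `w ∈ ℓ²(ℝ^q)` adapted to `(Θ_k)_k` (with `x₀ = 0`). -/
def HinfSqLtSigma {NN MM T n m q ℓ : ℕ} [NeZero T]
    (P : Matrix (Fin NN) (Fin NN) ℝ) (Qm : Matrix (Fin MM) (Fin MM) ℝ) (f : Fin MM → Bool)
    (A : Fin NN → Matrix (Fin n) (Fin n) ℝ) (B : Fin NN → Matrix (Fin n) (Fin m) ℝ)
    (C : Fin NN → Matrix (Fin ℓ) (Fin n) ℝ) (D : Fin NN → Matrix (Fin ℓ) (Fin m) ℝ)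
    (E : Fin NN → Matrix (Fin n) (Fin q) ℝ)
    (K : Fin NN → Fin T → Matrix (Fin m) (Fin n) ℝ) (γ : ℝ) : Prop :=
  ∃ c : ℝ, 0 ≤ c ∧ c < γ ∧
    ∀ (S : MJLSReal NN MM P Qm) (τ₀ : ℤ), τ₀ ≤ 0 → ∀ (σ₀ : Fin NN) (χ : XT NN MM T),
      inX f χ → (∀ᵐ ω ∂S.μ, rbarProc S.r S.s f τ₀ σ₀ 0 ω = χ) →
      ∀ (w : ℕ → S.Ω → Fin q → ℝ),
        (∀ k, Measurable[sigFiltSigma S k] (w k)) →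
        0 < (∑' k : ℕ, ∫⁻ ω, sqE (w k ω) ∂S.μ) →
        (∑' k : ℕ, ∫⁻ ω, sqE (w k ω) ∂S.μ) ≠ ⊤ →
        (∑' k : ℕ, ∫⁻ ω, sqE ((CKmat C D K (rbarProc S.r S.s f τ₀ σ₀ k ω)).mulVec
            (traj (AKmat A B K) (fun χ' => E χ'.1) (rbarProc S.r S.s f τ₀ σ₀) w 0 k ω)) ∂S.μ)
          ≤ ENNReal.ofReal c * (∑' k : ℕ, ∫⁻ ω, sqE (w k ω) ∂S.μ)

/-- `Σ̄_K` satisfies `‖Σ̄_K‖∞² < γ` (disturbances adapted to the filtration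
generated by `θ`). -/
def HinfSqLtBar {NN MM T n m q ℓ : ℕ} [NeZero T]
    (P : Matrix (Fin NN) (Fin NN) ℝ) (Qm : Matrix (Fin MM) (Fin MM) ℝ) (f : Fin MM → Bool)
    (A : Fin NN → Matrix (Fin n) (Fin n) ℝ) (B : Fin NN → Matrix (Fin n) (Fin m) ℝ)
    (C : Fin NN → Matrix (Fin ℓ) (Fin n) ℝ) (D : Fin NN → Matrix (Fin ℓ) (Fin m) ℝ)
    (E : Fin NN → Matrix (Fin n) (Fin q) ℝ)
    (K : Fin NN → Fin T → Matrix (Fin m) (Fin n) ℝ) (γ : ℝ) : Prop :=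
  ∃ c : ℝ, 0 ≤ c ∧ c < γ ∧
    ∀ (S : ThetaReal NN MM T P Qm f) (χ : XT NN MM T),
      inX f χ → (∀ᵐ ω ∂S.μ, S.θ 0 ω = χ) →
      ∀ (w : ℕ → S.Ω → Fin q → ℝ),
        (∀ k, Measurable[sigFiltBar S k] (w k)) →
        0 < (∑' k : ℕ, ∫⁻ ω, sqE (w k ω) ∂S.μ) →
        (∑' k : ℕ, ∫⁻ ω, sqE (w k ω) ∂S.μ) ≠ ⊤ →
        (∑' k : ℕ, ∫⁻ ω, sqE ((CKmat C D K (S.θ k ω)).mulVec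
            (traj (AKmat A B K) (fun χ' => E χ'.1) S.θ w 0 k ω)) ∂S.μ)
          ≤ ENNReal.ofReal c * (∑' k : ℕ, ∫⁻ ω, sqE (w k ω) ∂S.μ)

/-- The symmetric 4×4 block matrix appearing in the `H∞` LMI, with diagonal blocks
`D1, γ I_q, D3, I_ℓ`, sub-diagonal blocks `(3,1) = B31`, `(3,2) = B32`, `(4,1) = B41`,
the corresponding transposed blocks above the diagonal, and zeros elsewhere. -/
def hinfBlock {n q ℓ : ℕ} (γ : ℝ) (D1 D3 : Matrix (Fin n) (Fin n) ℝ)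
    (B31 : Matrix (Fin n) (Fin n) ℝ) (B32 : Matrix (Fin n) (Fin q) ℝ)
    (B41 : Matrix (Fin ℓ) (Fin n) ℝ) :
    Matrix ((Fin n ⊕ Fin q) ⊕ (Fin n ⊕ Fin ℓ)) ((Fin n ⊕ Fin q) ⊕ (Fin n ⊕ Fin ℓ)) ℝ :=
  Matrix.fromBlocks
    (Matrix.fromBlocks D1 0 0 (γ • (1 : Matrix (Fin q) (Fin q) ℝ)))
    (Matrix.fromBlocks B31ᵀ B41ᵀ B32ᵀ 0)
    (Matrix.fromBlocks B31 B32 B41 0)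
    (Matrix.fromBlocks D3 0 0 (1 : Matrix (Fin ℓ) (Fin ℓ) ℝ))

/-!
Between observations `σ` is frozen and `ρ` advances by one modulo `T`; at an observation they are
reset to `r` and `0`. Hence `r̄(k+1)` is a fixed function of `r̄(k)` and of the new values
`r(k+1)`, `s(k+1)`. By independence the pair `(r, s)` is itself a Markov chain, with transition
probabilities `P ⊗ Q`, so conditionally on its whole past the new pair is drawn from
`P_{α ⬝} ⊗ Q_{β ⬝}`. Every event about `r̄(0), …, r̄(k)` belongs to that past.
-/

section FiberSums

variable {Ω β : Type*} [MeasurableSpace Ω] [MeasurableSpace β] [MeasurableSingletonClass β]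
  [Countable β] {μ : Measure Ω} [IsFiniteMeasure μ] {Y : Ω → β}

theorem tsum_measureReal_preimage_singleton (hY : Measurable Y) (t : Set β) :
    ∑' y : t, μ.real (Y ⁻¹' {↑y}) = μ.real (Y ⁻¹' t) := by
  simp only [measureReal_def]
  rw [← ENNReal.tsum_toReal_eq fun y ↦ measure_ne_top μ _, tsum_measure_preimage_singleton
    t.to_countable fun y _ ↦ hY (measurableSet_singleton y)]

theorem measureReal_inter_preimage_eq_mul_of_fibers (hY : Measurable Y) {B : Set Ω} {t : Set β}
    {c : ℝ} (h : ∀ y ∈ t, μ.real (B ∩ Y ⁻¹' {y}) = c * μ.real (Y ⁻¹' {y})) :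
    μ.real (B ∩ Y ⁻¹' t) = c * μ.real (Y ⁻¹' t) := by
  have restrict_real (u : Set β) : (μ.restrict B).real (Y ⁻¹' u) = μ.real (B ∩ Y ⁻¹' u) := by
    rw [measureReal_restrict_apply (hY u.to_countable.measurableSet), Set.inter_comm]
  calc μ.real (B ∩ Y ⁻¹' t)
    _ = ∑' y : t, μ.real (B ∩ Y ⁻¹' {↑y}) := by
      simp only [← restrict_real, tsum_measureReal_preimage_singleton hY]
    _ = ∑' y : t, c * μ.real (Y ⁻¹' {↑y}) := tsum_congr fun y ↦ h y y.2
    _ = c * μ.real (Y ⁻¹' t) := by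
      rw [tsum_mul_left, tsum_measureReal_preimage_singleton hY]

end FiberSums

section MarkovChain

/-- The σ-algebra generated by `X 0, …, X k`: the past of the process `X` at time `k`. -/
abbrev pastMeasurableSpace {Ω S : Type*} [MeasurableSpace S] (X : ℕ → Ω → S) (k : ℕ) :
    MeasurableSpace Ω :=
  MeasurableSpace.comap (fun ω (l : Set.Iic k) ↦ X l ω) inferInstance

theorem measurable_pastMeasurableSpace {Ω S : Type*} [MeasurableSpace S] (X : ℕ → Ω → S)
    {l k : ℕ} (hl : l ≤ k) : Measurable[pastMeasurableSpace X k] (X l) :=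
  (measurable_pi_apply (X := fun _ : Set.Iic k ↦ S) ⟨l, hl⟩).comp
    (comap_measurable fun ω (l : Set.Iic k) ↦ X l ω)

variable {Ω S S' : Type} [MeasurableSpace Ω] [MeasurableSpace S] [MeasurableSingletonClass S]
  [MeasurableSpace S'] [MeasurableSingletonClass S'] {μ : Measure Ω}

theorem IsMarkovChain.measureReal_succ_inter_past [Countable S] [IsFiniteMeasure μ]
    {X : ℕ → Ω → S} {P : S → S → ℝ} (hX : IsMarkovChain μ X P) (hXm : ∀ k, Measurable (X k))
    {k : ℕ} {x : S} (y : S) {A : Set Ω} (hA : MeasurableSet[pastMeasurableSpace X k] A)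
    (hAx : ∀ ω ∈ A, X k ω = x) :
    μ.real ({ω | X (k + 1) ω = y} ∩ A) = P x y * μ.real A := by
  obtain ⟨t, -, rfl⟩ := hA
  refine measureReal_inter_preimage_eq_mul_of_fibers
    (measurable_pi_lambda _ fun l : Set.Iic k ↦ hXm l) fun h hh ↦ ?_
  obtain hempty | ⟨ω₀, rfl⟩ := ((fun ω (l : Set.Iic k) ↦ X l ω) ⁻¹' {h}).eq_empty_or_nonempty
  · simp [hempty]
  have fiber_eq : (fun ω (l : Set.Iic k) ↦ X l ω) ⁻¹' {fun l : Set.Iic k ↦ X l ω₀} =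
      {ω | ∀ l ≤ k, X l ω = X l ω₀} := by
    ext ω
    simp [funext_iff]
  rw [fiber_eq, ← hAx ω₀ hh]
  exact hX k y fun l ↦ X l ω₀

theorem measurableSet_forall_le_eq (k : ℕ) (i : ℕ → S) :
    MeasurableSet {x : ℕ → S | ∀ l ≤ k, x l = i l} := by
  measurability

theorem measurableSet_succ_eq_and_forall_le_eq (k : ℕ) (j : S) (i : ℕ → S) :
    MeasurableSet {x : ℕ → S | x (k + 1) = j ∧ ∀ l ≤ k, x l = i l} := by
  measurability

theorem IsMarkovChain.prodMk {X : ℕ → Ω → S} {Y : ℕ → Ω → S'} {P : S → S → ℝ} {Q : S' → S' → ℝ}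
    (hX : IsMarkovChain μ X P) (hY : IsMarkovChain μ Y Q)
    (hXY : IndepFun (fun ω l ↦ X l ω) (fun ω l ↦ Y l ω) μ) :
    IsMarkovChain μ (fun k ω ↦ (X k ω, Y k ω)) fun x y ↦ P x.1 y.1 * Q x.2 y.2 := by
  intro k j i
  have cylinder_mul := hXY.measure_inter_preimage_eq_mul _ _
    (measurableSet_forall_le_eq k fun l ↦ (i l).1) (measurableSet_forall_le_eq k fun l ↦ (i l).2)
  have succ_cylinder_mul := hXY.measure_inter_preimage_eq_mul _ _
    (measurableSet_succ_eq_and_forall_le_eq k j.1 fun l ↦ (i l).1)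
    (measurableSet_succ_eq_and_forall_le_eq k j.2 fun l ↦ (i l).2)
  have cylinder_eq : {ω | ∀ l ≤ k, (X l ω, Y l ω) = i l} =
      {ω | ∀ l ≤ k, X l ω = (i l).1} ∩ {ω | ∀ l ≤ k, Y l ω = (i l).2} := by
    ext ω
    simp only [Prod.ext_iff, Set.mem_inter_iff, Set.mem_ofPred_eq]
    grind
  have succ_cylinder_eq : {ω | (X (k + 1) ω, Y (k + 1) ω) = j ∧ ∀ l ≤ k, (X l ω, Y l ω) = i l} =
      {ω | X (k + 1) ω = j.1 ∧ ∀ l ≤ k, X l ω = (i l).1} ∩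
        {ω | Y (k + 1) ω = j.2 ∧ ∀ l ≤ k, Y l ω = (i l).2} := by
    ext ω
    simp only [Prod.ext_iff, Set.mem_inter_iff, Set.mem_ofPred_eq]
    grind
  simp only [Set.preimage_ofPred_eq] at cylinder_mul succ_cylinder_mul
  rw [cylinder_eq, succ_cylinder_eq, cylinder_mul, succ_cylinder_mul, ENNReal.toReal_mul,
    ENNReal.toReal_mul, hX k j.1, hY k j.2]
  ring

end MarkovChain

section ExtendedProcess

theorem ite_findGreatest_succ {α : Sort*} (p : ℕ → Prop) [DecidablePred p]
    [∀ k, Decidable (∃ j ≤ k, p j)] (g : ℕ → α) (d : α) (k : ℕ) :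
    (if ∃ j ≤ k + 1, p j then g (Nat.findGreatest p (k + 1)) else d) =
      if p (k + 1) then g (k + 1)
      else if ∃ j ≤ k, p j then g (Nat.findGreatest p k) else d := by
  by_cases h : p (k + 1)
  · rw [if_pos ⟨k + 1, le_rfl, h⟩, if_pos h, Nat.findGreatest_eq h]
  · have exists_iff : (∃ j ≤ k + 1, p j) ↔ ∃ j ≤ k, p j := by
      simp only [Nat.le_succ_iff]
      grind
    simp only [exists_iff, Nat.findGreatest_of_not h, if_neg h]

@[simp]
theorem intToFin_zero (T : ℕ) [NeZero T] : intToFin T 0 = 0 := by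
  simp [intToFin]

theorem intToFin_add_one (T : ℕ) [NeZero T] (a : ℤ) : intToFin T (a + 1) = intToFin T a + 1 := by
  have emod_nonneg (b : ℤ) : 0 ≤ b % (T : ℤ) :=
    Int.emod_nonneg b (Int.natCast_ne_zero.2 (NeZero.ne T))
  apply Fin.ext
  rw [Fin.val_add, Fin.val_one']
  zify
  simp [intToFin, Int.toNat_of_nonneg (emod_nonneg _)]

variable {Ω : Type} {NN MM T : ℕ} [NeZero T] (r : ℕ → Ω → Fin NN) (s : ℕ → Ω → Fin MM)
  (f : Fin MM → Bool) (τ₀ : ℤ) (σ₀ : Fin NN) (k : ℕ) (ω : Ω)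

theorem tauZ_succ : tauZ s f τ₀ (k + 1) ω =
    if f (s (k + 1) ω) = true then ((k + 1 : ℕ) : ℤ) else tauZ s f τ₀ k ω :=
  ite_findGreatest_succ (fun j ↦ f (s j ω) = true) (fun j ↦ (j : ℤ)) τ₀ k

theorem sigmaProc_succ : sigmaProc r s f σ₀ (k + 1) ω =
    if f (s (k + 1) ω) = true then r (k + 1) ω else sigmaProc r s f σ₀ k ω :=
  ite_findGreatest_succ (fun j ↦ f (s j ω) = true) (fun j ↦ r j ω) σ₀ k

theorem rhoProc_succ : (rhoProc s f τ₀ (k + 1) ω : Fin T) =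
    if f (s (k + 1) ω) = true then 0 else rhoProc s f τ₀ k ω + 1 := by
  simp only [rhoProc, tauZ_succ, ← intToFin_add_one]
  split_ifs
  · simp
  · congr 1
    push_cast
    ring

/-- The state following `χ` in the extended process when the underlying chains move to `(a, b)`:
an observation (`f b = true`) resets the last two components, otherwise the third is kept and the
counter advances. -/
def rbarStep (f : Fin MM → Bool) (χ : XT NN MM T) (a : Fin NN) (b : Fin MM) : XT NN MM T :=
  (a, b, if f b = true then (a, 0) else (χ.2.2.1, χ.2.2.2 + 1))

theorem rbarProc_succ : (rbarProc r s f τ₀ σ₀ (k + 1) ω : XT NN MM T) =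
    rbarStep f (rbarProc r s f τ₀ σ₀ k ω) (r (k + 1) ω) (s (k + 1) ω) := by
  simp only [rbarProc, rbarStep, sigmaProc_succ, rhoProc_succ]
  split_ifs <;> rfl

-- The initial data `(τ₀, σ₀)` act as a state at time `-1`, with counter `⌊-1 - τ₀⌋_T` and
-- immaterial first two components.
theorem rbarProc_zero : (rbarProc r s f τ₀ σ₀ 0 ω : XT NN MM T) =
    rbarStep f (r 0 ω, s 0 ω, σ₀, intToFin T (-1 - τ₀)) (r 0 ω) (s 0 ω) := by
  have counter_eq : -1 - τ₀ + 1 = -τ₀ := by ring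
  by_cases h : f (s 0 ω) = true <;>
    simp [rbarProc, rbarStep, sigmaProc, rhoProc, tauZ, ← intToFin_add_one, counter_eq, h]

variable {r s f τ₀ σ₀ k ω}

theorem rbarStep_eq_iff {χ χ' : XT NN MM T} {a : Fin NN} {b : Fin MM} :
    rbarStep f χ a b = χ' ↔ (a, b) = (χ'.1, χ'.2.1) ∧ rbarStep f χ χ'.1 χ'.2.1 = χ' := by
  constructor
  · rintro rfl
    exact ⟨rfl, rfl⟩
  · rintro ⟨hab, h⟩
    obtain ⟨rfl, rfl⟩ := Prod.mk.inj hab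
    exact h

theorem pbar_eq_ite_rbarStep (P : Matrix (Fin NN) (Fin NN) ℝ) (Q : Matrix (Fin MM) (Fin MM) ℝ)
    (f : Fin MM → Bool) (χ χ' : XT NN MM T) :
    pbar P Q f χ χ' =
      if rbarStep f χ χ'.1 χ'.2.1 = χ' then P χ.1 χ'.1 * Q χ.2.1 χ'.2.1 else 0 := by
  obtain ⟨α', β', γ', δ'⟩ := χ'
  by_cases h : f β' = true <;>
    simp [pbar, rbarStep, h, Prod.ext_iff, eq_comm]

theorem measurable_rbarStep [MeasurableSpace Ω] {χ : Ω → XT NN MM T} {a : Ω → Fin NN}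
    {b : Ω → Fin MM} (hχ : Measurable χ) (ha : Measurable a) (hb : Measurable b) :
    Measurable fun ω ↦ rbarStep f (χ ω) (a ω) (b ω) :=
  (Measurable.of_discrete (f := fun q : XT NN MM T × Fin NN × Fin MM ↦
    rbarStep f q.1 q.2.1 q.2.2)).comp (hχ.prodMk (ha.prodMk hb))

theorem measurable_rbarProc [MeasurableSpace Ω] (hr : ∀ l ≤ k, Measurable (r l))
    (hs : ∀ l ≤ k, Measurable (s l)) :
    Measurable (rbarProc r s f τ₀ σ₀ k : Ω → XT NN MM T) := by
  induction k with
  | zero =>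
    have hr₀ := hr 0 le_rfl
    have hs₀ := hs 0 le_rfl
    rw [funext (rbarProc_zero r s f τ₀ σ₀)]
    exact measurable_rbarStep (by fun_prop) hr₀ hs₀
  | succ k ih =>
    rw [funext (rbarProc_succ r s f τ₀ σ₀ k)]
    exact measurable_rbarStep (ih (fun l hl ↦ hr l (by lia)) fun l hl ↦ hs l (by lia))
      (hr _ le_rfl) (hs _ le_rfl)

theorem measurableSet_past_rbarProc_eq (k₀ : ℕ) (χ : ℕ → XT NN MM T) :
    MeasurableSet[pastMeasurableSpace (fun l ω ↦ (r l ω, s l ω)) k]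
      {ω | ∀ j, k₀ ≤ j → j ≤ k → rbarProc r s f τ₀ σ₀ j ω = χ j} := by
  let _ : MeasurableSpace Ω := pastMeasurableSpace (fun l ω ↦ (r l ω, s l ω)) k
  have pair_measurable (l : ℕ) (hl : l ≤ k) : Measurable fun ω ↦ (r l ω, s l ω) :=
    measurable_pastMeasurableSpace (fun l ω ↦ (r l ω, s l ω)) hl
  simp only [Set.ofPred_forall]
  refine .iInter fun j ↦ .iInter fun _ ↦ .iInter fun hj ↦ ?_
  exact measurable_rbarProc (fun l hl ↦ (pair_measurable l (hl.trans hj)).fst)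
    (fun l hl ↦ (pair_measurable l (hl.trans hj)).snd) (measurableSet_singleton (χ j))

end ExtendedProcess

theorem rbar_transition_unobserved_general {Ω : Type} [MeasurableSpace Ω] (μ : Measure Ω)
    [IsProbabilityMeasure μ] {NN MM T : ℕ} [NeZero T]
    (P : Matrix (Fin NN) (Fin NN) ℝ) (Q : Matrix (Fin MM) (Fin MM) ℝ)
    (r : ℕ → Ω → Fin NN) (s : ℕ → Ω → Fin MM)
    (hmr : ∀ k, Measurable (r k)) (hms : ∀ k, Measurable (s k))
    (hr : IsMarkovChain μ r fun i j => P i j) (hs : IsMarkovChain μ s fun i j => Q i j)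
    (hind : IndepFun (fun ω l => r l ω) (fun ω l => s l ω) μ)
    (f : Fin MM → Bool) (τ₀ : ℤ) (σ₀ : Fin NN) (k : ℕ) (χ χ' : XT NN MM T) {A : Set Ω}
    (hA : MeasurableSet[pastMeasurableSpace (fun l ω ↦ (r l ω, s l ω)) k] A)
    (hAχ : ∀ ω ∈ A, rbarProc r s f τ₀ σ₀ k ω = χ) :
    μ.real ({ω | rbarProc r s f τ₀ σ₀ (k + 1) ω = χ'} ∩ A) = pbar P Q f χ χ' * μ.real A := by
  have rbar_succ_iff : ∀ ω ∈ A, rbarProc r s f τ₀ σ₀ (k + 1) ω = χ' ↔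
      (r (k + 1) ω, s (k + 1) ω) = (χ'.1, χ'.2.1) ∧ rbarStep f χ χ'.1 χ'.2.1 = χ' := by
    intro ω hω
    rw [rbarProc_succ, hAχ ω hω, rbarStep_eq_iff]
  rw [pbar_eq_ite_rbarStep]
  split_ifs with hχχ'
  · have event_eq : {ω | rbarProc r s f τ₀ σ₀ (k + 1) ω = χ'} ∩ A =
        {ω | (r (k + 1) ω, s (k + 1) ω) = (χ'.1, χ'.2.1)} ∩ A := by
      ext ω
      exact and_congr_left fun hω ↦ (rbar_succ_iff ω hω).trans (and_iff_left hχχ')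
    have pair_eq : ∀ ω ∈ A, (r k ω, s k ω) = (χ.1, χ.2.1) := by
      intro ω hω
      rw [← hAχ ω hω]
      rfl
    rw [event_eq]
    exact (hr.prodMk hs hind).measureReal_succ_inter_past
      (fun l ↦ (hmr l).prodMk (hms l)) (χ'.1, χ'.2.1) hA pair_eq
  · have event_eq : {ω | rbarProc r s f τ₀ σ₀ (k + 1) ω = χ'} ∩ A = ∅ :=
      Set.eq_empty_of_forall_notMem fun ω hω ↦ hχχ' ((rbar_succ_iff ω hω.2).1 hω.1).2
    simp [event_eq]

/-- the conditional transition probabilities of `r̄` at a state `χ'`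
with `f(β') = 0`.  (In 0-indexed form, `⌊δ' - δ_k - 1⌋_T = 0` reads `δ' = δ_k + 1`.) -/
theorem rbar_transition_unobserved
    {Ω : Type} [MeasurableSpace Ω] (μ : Measure Ω) [IsProbabilityMeasure μ]
    {NN MM T : ℕ} [NeZero NN] [NeZero MM] [NeZero T]
    (P : Matrix (Fin NN) (Fin NN) ℝ) (Q : Matrix (Fin MM) (Fin MM) ℝ)
    (hP0 : ∀ i j, 0 ≤ P i j) (hP1 : ∀ i, ∑ j, P i j = 1)
    (hQ0 : ∀ i j, 0 ≤ Q i j) (hQ1 : ∀ i, ∑ j, Q i j = 1)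
    (r : ℕ → Ω → Fin NN) (s : ℕ → Ω → Fin MM)
    (hmr : ∀ k, Measurable (r k)) (hms : ∀ k, Measurable (s k))
    (hr : IsMarkovChain μ r fun i j => P i j) (hs : IsMarkovChain μ s fun i j => Q i j)
    (hind : IndepFun (fun ω l => r l ω) (fun ω l => s l ω) μ)
    (f : Fin MM → Bool) (τ₀ : ℤ) (hτ₀ : τ₀ ≤ 0) (σ₀ : Fin NN)
    (k₀ k : ℕ) (hk : k₀ ≤ k)
    (χ : ℕ → XT NN MM T) (hχ : ∀ j, k₀ ≤ j → j ≤ k → inX f (χ j))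
    (χ' : XT NN MM T) (hχ' : inX f χ') (hf : f χ'.2.1 = false)
    (hpos : 0 < (μ {ω | ∀ j, k₀ ≤ j → j ≤ k → rbarProc r s f τ₀ σ₀ j ω = χ j}).toReal) :
    (μ ({ω | rbarProc r s f τ₀ σ₀ (k + 1) ω = χ'}
        ∩ {ω | ∀ j, k₀ ≤ j → j ≤ k → rbarProc r s f τ₀ σ₀ j ω = χ j})).toReal
      / (μ {ω | ∀ j, k₀ ≤ j → j ≤ k → rbarProc r s f τ₀ σ₀ j ω = χ j}).toReal
      = (if χ'.2.2.1 = (χ k).2.2.1 ∧ χ'.2.2.2 = (χ k).2.2.2 + 1 then (1 : ℝ) else 0)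
          * P (χ k).1 χ'.1 * Q (χ k).2.1 χ'.2.1 := by
  rw [div_eq_iff hpos.ne']
  simpa [pbar, hf, measureReal_def] using
    rbar_transition_unobserved_general μ P Q r s hmr hms hr hs hind f τ₀ σ₀ k (χ k) χ'
      (measurableSet_past_rbarProc_eq k₀ χ) fun ω hω ↦ hω k hk le_rfl

end
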